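/- Fix integers d and k with 1 ≤ k < d − 1 (so d ≥ 3), a unit vector ψ ∈ ℂ^d, and a real number p. If (S, S_ch) is a parallel k-call probabilistic protocol satisfying S ⋆ U^{⊗k} = p · U†|ψ⟩⟨ψ|U for all U ∈ SU(d), then p = 0. That is, exact probabilistic inversion of an unknown d-dimensional unitary on a known pure state is impossible with fewer than d−1 parallel calls, even with full classical knowledge of the input state. -/

import Mathlib

open Matrix Kronecker BigOperators ComplexOrder

noncomputable section

/-- Entrywise complex conjugate `U̅` of a matrix. -/
def mconj {d : ℕ} (U : Matrix (Fin d) (Fin d) ℂ) : Matrix (Fin d) (Fin d) ℂ :=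
  U.map (starRingEnd ℂ)

/-- Rank-one outer product `|v⟩⟨v|`. -/
def outer {n : Type*} (v : n → ℂ) : Matrix n n ℂ :=
  Matrix.vecMulVec v (star v)

/-- Choi vector `|U⟩⟩ = Σ_i e_i ⊗ U e_i`. -/
def choiVec {d : ℕ} (U : Matrix (Fin d) (Fin d) ℂ) : Fin d × Fin d → ℂ :=
  fun p => U p.2 p.1

/-- `|U⟩⟩⟨⟨U|`. -/
def choiProj {d : ℕ} (U : Matrix (Fin d) (Fin d) ℂ) :
    Matrix (Fin d × Fin d) (Fin d × Fin d) ℂ :=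
  outer (choiVec U)

/-- Partial trace over the first tensor factor. -/
def ptrLeft {α β : Type*} [Fintype α] (S : Matrix (α × β) (α × β) ℂ) :
    Matrix β β ℂ :=
  fun b b' => ∑ a, S (a, b) (a, b')

/-- Partial trace over the second (last) tensor factor. -/
def ptrRight {α β : Type*} [Fintype β] (S : Matrix (α × β) (α × β) ℂ) :
    Matrix α α ℂ :=
  fun a a' => ∑ b, S (a, b) (a', b)

/-- `(|U⟩⟩⟨⟨U|)^{⊗k}`, where the `j`-th copy acts on the `j`-th factor of `I`
and the `j`-th factor of `O`; `(ℂ^d)^{⊗k}` is indexed by `Fin k → Fin d`. -/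
def choiProjK {d : ℕ} (k : ℕ) (U : Matrix (Fin d) (Fin d) ℂ) :
    Matrix ((Fin k → Fin d) × (Fin k → Fin d)) ((Fin k → Fin d) × (Fin k → Fin d)) ℂ :=
  fun x y => ∏ j, choiProj U (x.1 j, x.2 j) (y.1 j, y.2 j)

/-- Action `S ⋆ U^{⊗k} := Tr_{IO}[ S · ((|U̅⟩⟩⟨⟨U̅|)^{⊗k}_{IO} ⊗ 1_F) ]` of a
parallel `k`-call supermap on the unitary channel given by `U`. -/
def actK {d k : ℕ}
    (S : Matrix (((Fin k → Fin d) × (Fin k → Fin d)) × Fin d)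
        (((Fin k → Fin d) × (Fin k → Fin d)) × Fin d) ℂ)
    (U : Matrix (Fin d) (Fin d) ℂ) : Matrix (Fin d) (Fin d) ℂ :=
  ptrLeft (S * (choiProjK k (mconj U) ⊗ₖ (1 : Matrix (Fin d) (Fin d) ℂ)))

/-- A parallel `k`-call probabilistic protocol: `0 ≤ S ≤ S_ch` with
`Tr_F(S_ch) = σ ⊗ 1_O`, `σ ≥ 0` on `(ℂ^d)^{⊗k}`, `Tr σ = 1`. -/
def IsProtocolK {d k : ℕ}
    (S Sch : Matrix (((Fin k → Fin d) × (Fin k → Fin d)) × Fin d)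
        (((Fin k → Fin d) × (Fin k → Fin d)) × Fin d) ℂ) : Prop :=
  S.PosSemidef ∧ (Sch - S).PosSemidef ∧
    ∃ σ : Matrix (Fin k → Fin d) (Fin k → Fin d) ℂ, σ.PosSemidef ∧ σ.trace = 1 ∧
      ptrRight Sch = σ ⊗ₖ (1 : Matrix (Fin k → Fin d) (Fin k → Fin d) ℂ)

/-
A positive semidefinite `S` is a sum of rank-one operators, and each summand contributes to
`S ⋆ U^{⊗k}` the outer square of a vector `φ(U)` whose entries are homogeneous polynomials of degree
`k` in the entries of `U`. Since the sum is proportional to `|U†ψ⟩⟨U†ψ|`, every `φ(U)` is parallel to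
`U†ψ`. This extends from `SU(d)` to `U(d)` by rescaling `U` by a phase.

Choose a unitary `V` such that all entries of `V†ψ` agree and restrict to `U = V · diag(z) · W`.
There `W U†ψ` is proportional to `z̅`, so the entries `Q_i(z)` of `W φ(U)` satisfy `z_i Q_i = z_j Q_j`
on the torus, hence as polynomials. Their common value is divisible by every variable, although its
degree `k + 1` is smaller than the number `d` of variables. So it vanishes, and `φ(U) = 0`.
-/

section RankOne

theorem outer_eq_zero_iff {n : Type*} {v : n → ℂ} : outer v = 0 ↔ v = 0 := by
  rw [outer, vecMulVec_eq_zero, star_eq_zero, or_self]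

variable {n : Type*} [Fintype n]

theorem star_dotProduct_outer_mulVec (v x : n → ℂ) :
    star x ⬝ᵥ (outer v *ᵥ x) = (star x ⬝ᵥ v) * star (star x ⬝ᵥ v) := by
  rw [outer, vecMulVec_mulVec, op_smul_eq_smul, dotProduct_smul, smul_eq_mul, star_dotProduct,
    mul_comm]

theorem conjTranspose_mul_outer_mul (U : Matrix n n ℂ) (v : n → ℂ) :
    Uᴴ * outer v * U = outer (Uᴴ *ᵥ v) := by
  rw [outer, mul_vecMulVec, vecMulVec_mul, outer, star_mulVec, conjTranspose_conjTranspose]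

end RankOne

theorem exists_eq_smul_of_sum_outer_eq_smul_outer {ι n : Type*} [Fintype ι] [Finite n]
    {φ : ι → n → ℂ} {u : n → ℂ} {p : ℂ} (h : ∑ i, outer (φ i) = p • outer u) (i : ι) :
    ∃ c : ℂ, φ i = c • u := by
  have := Fintype.ofFinite n
  set c := (star u ⬝ᵥ φ i) / (star u ⬝ᵥ u)
  set x := φ i - c • u with hx
  have hux : star u ⬝ᵥ x = 0 := by
    rcases eq_or_ne u 0 with rfl | hu
    · simp
    · rw [hx, dotProduct_sub, dotProduct_smul, smul_eq_mul,
        div_mul_cancel₀ _ (dotProduct_star_self_eq_zero.not.2 hu), sub_self]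
  have hxu : star x ⬝ᵥ u = 0 := by rw [star_dotProduct, hux, star_zero]
  have hsum : ∑ j, (star x ⬝ᵥ φ j) * star (star x ⬝ᵥ φ j) = 0 :=
    calc ∑ j, (star x ⬝ᵥ φ j) * star (star x ⬝ᵥ φ j)
        = star x ⬝ᵥ ((∑ j, outer (φ j)) *ᵥ x) := by
          simp only [sum_mulVec, dotProduct_sum, star_dotProduct_outer_mulVec]
      _ = 0 := by
          rw [h, smul_mulVec, dotProduct_smul, star_dotProduct_outer_mulVec, hxu, zero_mul,
            smul_zero]
  have hxφ : star x ⬝ᵥ φ i = 0 := by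
    simpa using (Finset.sum_eq_zero_iff_of_nonneg fun j _ => mul_star_self_nonneg _).1 hsum i
  have hx0 : x = 0 := by
    rw [← dotProduct_star_self_eq_zero]
    nth_rw 2 [hx]
    rw [dotProduct_sub, dotProduct_smul, hxφ, hxu, smul_zero, sub_zero]
  exact ⟨c, sub_eq_zero.1 hx0⟩

section UnitaryGroup

variable {𝕜 : Type*} [RCLike 𝕜]

theorem mul_star_self_of_norm_eq_one {z : 𝕜} (hz : ‖z‖ = 1) : z * star z = 1 := by
  rw [RCLike.star_def, RCLike.mul_conj, hz]
  norm_num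

theorem exists_linearIsometryEquiv_apply_eq {E : Type*} [NormedAddCommGroup E]
    [InnerProductSpace 𝕜 E] [FiniteDimensional 𝕜 E] {v w : E} (h : ‖v‖ = ‖w‖) :
    ∃ f : E ≃ₗᵢ[𝕜] E, f v = w := by
  rcases eq_or_ne v 0 with rfl | hv
  · exact ⟨.refl 𝕜 E, by simpa [eq_comm] using h⟩
  let e := LinearEquiv.toSpanNonzeroSingleton 𝕜 E v hv
  let L : (𝕜 ∙ v) →ₗᵢ[𝕜] E :=
    { toLinearMap := LinearMap.toSpanSingleton 𝕜 E w ∘ₗ e.symm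
      norm_map' := fun s => by
        obtain ⟨a, rfl⟩ := e.surjective s
        rw [LinearMap.comp_apply, LinearEquiv.coe_coe, e.symm_apply_apply]
        simp [e, norm_smul, h] }
  refine ⟨L.extend.toLinearIsometryEquiv rfl, ?_⟩
  calc L.extend v = L (e 1) := by simpa [e] using L.extend_apply (e 1)
    _ = w := by simp [L]

variable {n : Type*} [Fintype n] [DecidableEq n]

theorem exists_mem_unitaryGroup_mulVec_eq {v w : n → 𝕜}
    (h : ‖WithLp.toLp 2 v‖ = ‖WithLp.toLp 2 w‖) : ∃ U ∈ unitaryGroup n 𝕜, U *ᵥ v = w := by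
  obtain ⟨f, hf⟩ := exists_linearIsometryEquiv_apply_eq (𝕜 := 𝕜) h
  let b := EuclideanSpace.basisFun n 𝕜
  refine ⟨_, f.toMatrix_mem_unitaryGroup b b, ?_⟩
  have hrepr := LinearMap.toMatrix_mulVec_repr b.toBasis b.toBasis f.toLinearMap (WithLp.toLp 2 v)
  have hcoe : ∀ x : EuclideanSpace 𝕜 n, ⇑(b.toBasis.repr x) = x.ofLp := fun x => by
    ext i
    simp [b]
  rw [hcoe, hcoe] at hrepr
  exact hrepr.trans (congrArg WithLp.ofLp hf)

theorem exists_mem_unitaryGroup_conjTranspose_mulVec_eq_const (ψ : n → 𝕜) :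
    ∃ V ∈ unitaryGroup n 𝕜, ∃ r : 𝕜, Vᴴ *ᵥ ψ = fun _ => r := by
  rcases isEmpty_or_nonempty n with _ | _
  · exact ⟨1, one_mem _, 0, Subsingleton.elim _ _⟩
  have hone : ‖(WithLp.toLp 2 1 : EuclideanSpace 𝕜 n)‖ ≠ 0 := by simp
  let r : ℝ := ‖WithLp.toLp 2 ψ‖ / ‖(WithLp.toLp 2 1 : EuclideanSpace 𝕜 n)‖
  have hnorm : ‖WithLp.toLp 2 ψ‖ = ‖WithLp.toLp 2 ((r : 𝕜) • (1 : n → 𝕜))‖ := by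
    rw [WithLp.toLp_smul, norm_smul, RCLike.norm_ofReal, abs_of_nonneg (by positivity),
      div_mul_cancel₀ _ hone]
  obtain ⟨U, hU, hUψ⟩ := exists_mem_unitaryGroup_mulVec_eq hnorm
  refine ⟨star U, Unitary.star_mem hU, r, ?_⟩
  rw [star_eq_conjTranspose, conjTranspose_conjTranspose, hUψ]
  ext i
  simp

theorem diagonal_mem_unitaryGroup {z : n → 𝕜} (hz : ∀ i, ‖z i‖ = 1) :
    diagonal z ∈ unitaryGroup n 𝕜 := by
  rw [mem_unitaryGroup_iff, star_eq_conjTranspose, diagonal_conjTranspose, diagonal_mul_diagonal,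
    ← diagonal_one]
  exact congrArg diagonal (funext fun i => mul_star_self_of_norm_eq_one (hz i))

theorem exists_smul_mem_specialUnitaryGroup [Nonempty n] {U : Matrix n n ℂ}
    (hU : U ∈ unitaryGroup n ℂ) : ∃ c : ℂ, c ≠ 0 ∧ c • U ∈ specialUnitaryGroup n ℂ := by
  have hdet : ‖U.det‖ = 1 := CStarRing.norm_of_mem_unitary (det_of_mem_unitary hU)
  have hdet0 : U.det ≠ 0 := norm_ne_zero_iff.1 (hdet ▸ one_ne_zero)
  obtain ⟨c, hc⟩ := IsAlgClosed.exists_pow_nat_eq (U.det)⁻¹ (Fintype.card_pos (α := n))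
  have hc1 : ‖c‖ = 1 := by
    rw [← pow_eq_one_iff_of_nonneg (norm_nonneg c) (Fintype.card_ne_zero (α := n)), ← norm_pow, hc,
      norm_inv, hdet, inv_one]
  refine ⟨c, norm_ne_zero_iff.1 (hc1 ▸ one_ne_zero), mem_specialUnitaryGroup_iff.2 ⟨?_, ?_⟩⟩
  · rw [smul_eq_diagonal_mul]
    exact mul_mem (diagonal_mem_unitaryGroup fun _ => hc1) hU
  · rw [det_smul, hc, inv_mul_cancel₀ hdet0]

theorem mulVec_eq_zero_iff_of_mem_unitaryGroup {R : Type*} [CommRing R] [StarRing R]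
    {U : Matrix n n R} (hU : U ∈ unitaryGroup n R) {v : n → R} : U *ᵥ v = 0 ↔ v = 0 := by
  refine ⟨fun h => ?_, fun h => h ▸ mulVec_zero U⟩
  rw [← one_mulVec v, ← mem_unitaryGroup_iff'.1 hU, ← mulVec_mulVec, h, mulVec_zero]

end UnitaryGroup

open MvPolynomial

section Polynomial

variable {σ R : Type*} [CommSemiring R]

theorem eval_smul_of_isHomogeneous {k : ℕ} {P : MvPolynomial σ R} (hP : P.IsHomogeneous k)
    (c : R) (z : σ → R) : eval (c • z) P = c ^ k * eval z P := by
  rw [eval_eq, eval_eq, Finset.mul_sum]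
  refine Finset.sum_congr rfl fun m hm => ?_
  have hdeg : ∑ i ∈ m.support, m i = k := by
    rw [← hP (mem_support_iff.1 hm), Finsupp.weight_apply, Finsupp.sum]
    simp
  simp only [Pi.smul_apply, smul_eq_mul, mul_pow, Finset.prod_mul_distrib,
    Finset.prod_pow_eq_pow_sum, hdeg]
  ring

theorem eq_zero_of_forall_X_dvd_of_totalDegree_lt [Fintype σ] {P : MvPolynomial σ R}
    (hdvd : ∀ i, X i ∣ P) (hdeg : P.totalDegree < Fintype.card σ) : P = 0 := by
  classical
  by_contra hP
  obtain ⟨m, hm⟩ := exists_coeff_ne_zero hP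
  have hpos : ∀ i, 1 ≤ m i := by
    intro i
    by_contra hi
    obtain ⟨Q, rfl⟩ := hdvd i
    rw [coeff_X_mul', if_neg (by simpa using hi)] at hm
    exact hm rfl
  refine hdeg.not_ge ?_
  calc Fintype.card σ = ∑ _i : σ, 1 := by simp
    _ ≤ ∑ i, m i := Finset.sum_le_sum fun i _ => hpos i
    _ = m.degree := (Finsupp.degree_eq_sum m).symm
    _ ≤ P.totalDegree := le_totalDegree (mem_support_iff.2 hm)

theorem infinite_unit_sphere_complex : (Metric.sphere (0 : ℂ) 1).Infinite :=
  (isPreconnected_sphere (by simp [Complex.rank_real_complex]) 0 1).infinite_of_nontrivial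
    ⟨1, by simp, -1, by simp, by norm_num⟩

theorem eq_zero_of_mul_eval_eq_on_torus [Fintype σ] {Q : σ → MvPolynomial σ ℂ}
    (hdeg : ∀ i, (Q i).totalDegree + 1 < Fintype.card σ)
    (h : ∀ z : σ → ℂ, (∀ i, ‖z i‖ = 1) → ∀ i j, z i * eval z (Q i) = z j * eval z (Q j)) (i : σ) :
    Q i = 0 := by
  have heq : ∀ j, X i * Q i = X j * Q j := fun j =>
    funext_set (fun _ => Metric.sphere 0 1) (fun _ => infinite_unit_sphere_complex) fun z hz => by
      simpa using h z (by simpa using hz) i j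
  have hzero : X i * Q i = 0 := by
    refine eq_zero_of_forall_X_dvd_of_totalDegree_lt (fun j => heq j ▸ dvd_mul_right _ _) ?_
    calc (X i * Q i).totalDegree ≤ (X i : MvPolynomial σ ℂ).totalDegree + (Q i).totalDegree :=
          totalDegree_mul _ _
      _ < Fintype.card σ := by rw [totalDegree_X, add_comm]; exact hdeg i
  exact (mul_eq_zero.1 hzero).resolve_left (X_ne_zero i)

end Polynomial

section PolynomialMap

variable {m n R : Type*} [CommSemiring R]

/-- The vector-valued polynomial map on matrices with components `P`, evaluated at `U`; the variable
`X (i, j)` stands for the entry `U i j`. -/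
def evalEntries (P : m → MvPolynomial (n × n) R) (U : Matrix n n R) : m → R :=
  fun f => eval (fun ij => U ij.1 ij.2) (P f)

theorem evalEntries_smul {k : ℕ} {P : m → MvPolynomial (n × n) R}
    (hP : ∀ f, (P f).IsHomogeneous k) (c : R) (U : Matrix n n R) :
    evalEntries P (c • U) = c ^ k • evalEntries P U :=
  funext fun f => eval_smul_of_isHomogeneous (hP f) c fun ij => U ij.1 ij.2

variable [Fintype n]

/-- The polynomial in `z` given by the `f`-th entry of `W *ᵥ P (V * diagonal z * W)`. -/
def torusRestriction (P : n → MvPolynomial (n × n) R) (V W : Matrix n n R) (f : n) :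
    MvPolynomial n R :=
  ∑ g, C (W f g) * bind₁ (fun ij => ∑ l, C (V ij.1 l * W l ij.2) * X l) (P g)

theorem isHomogeneous_torusRestriction {k : ℕ} {P : n → MvPolynomial (n × n) R}
    (hP : ∀ f, (P f).IsHomogeneous k) (V W : Matrix n n R) (f : n) :
    (torusRestriction P V W f).IsHomogeneous k :=
  .sum _ _ _ fun g _ => .C_mul (one_mul k ▸
    (hP g).aeval _ fun _ => .sum _ _ _ fun l _ => isHomogeneous_C_mul_X _ l) _

variable [DecidableEq n]

theorem eval_torusRestriction (P : n → MvPolynomial (n × n) R) (V W : Matrix n n R) (z : n → R)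
    (f : n) :
    eval z (torusRestriction P V W f) = (W *ᵥ evalEntries P (V * diagonal z * W)) f := by
  have hentry : ∀ ij : n × n, eval z (∑ l, C (V ij.1 l * W l ij.2) * X l)
      = (V * diagonal z * W) ij.1 ij.2 := by
    intro ij
    rw [mul_apply]
    simp [mul_diagonal, mul_right_comm]
  have hbind : ∀ g, eval z (bind₁ (fun ij => ∑ l, C (V ij.1 l * W l ij.2) * X l) (P g))
      = evalEntries P (V * diagonal z * W) g := fun g =>
    (eval₂Hom_bind₁ (RingHom.id R) z _ (P g)).trans
      (congrArg (fun y => eval y (P g)) (funext hentry))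
  rw [torusRestriction, map_sum]
  exact Finset.sum_congr rfl fun g _ => by rw [map_mul, eval_C, hbind]

theorem evalEntries_eq_zero_of_forall_mem_unitaryGroup {k : ℕ} (hk : k + 1 < Fintype.card n)
    {P : n → MvPolynomial (n × n) ℂ} (hP : ∀ f, (P f).IsHomogeneous k) {ψ : n → ℂ}
    (h : ∀ U ∈ unitaryGroup n ℂ, ∃ c : ℂ, evalEntries P U = c • (Uᴴ *ᵥ ψ))
    {U : Matrix n n ℂ} (hU : U ∈ unitaryGroup n ℂ) : evalEntries P U = 0 := by
  obtain ⟨V, hV, r, hVψ⟩ := exists_mem_unitaryGroup_conjTranspose_mulVec_eq_const ψ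
  obtain ⟨W, hW, rfl⟩ : ∃ W ∈ unitaryGroup n ℂ, V * W = U :=
    ⟨star V * U, mul_mem (Unitary.star_mem hV) hU, by
      rw [← mul_assoc, mem_unitaryGroup_iff.1 hV, one_mul]⟩
  have htorus : ∀ z : n → ℂ, (∀ i, ‖z i‖ = 1) → ∀ i j,
      z i * eval z (torusRestriction P V W i) = z j * eval z (torusRestriction P V W j) := by
    intro z hz
    obtain ⟨c, hc⟩ := h _ (mul_mem (mul_mem hV (diagonal_mem_unitaryGroup hz)) hW)
    have hentry : ∀ i, z i * eval z (torusRestriction P V W i) = c * r := by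
      intro i
      have hmulVec : W *ᵥ ((V * diagonal z * W)ᴴ *ᵥ ψ) = diagonal (star z) *ᵥ fun _ => r := by
        rw [conjTranspose_mul, conjTranspose_mul, diagonal_conjTranspose, ← mulVec_mulVec,
          ← mulVec_mulVec, hVψ, mulVec_mulVec, ← star_eq_conjTranspose W,
          mem_unitaryGroup_iff.1 hW, one_mulVec]
      rw [eval_torusRestriction, hc, mulVec_smul, hmulVec, Pi.smul_apply, mulVec_diagonal,
        smul_eq_mul, Pi.star_apply]
      linear_combination c * r * mul_star_self_of_norm_eq_one (hz i)
    intro i j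
    rw [hentry, hentry]
  have hzero : ∀ f, torusRestriction P V W f = 0 := eq_zero_of_mul_eval_eq_on_torus
    (fun f => by have := (isHomogeneous_torusRestriction hP V W f).totalDegree_le; omega) htorus
  have hVW : V * diagonal 1 * W = V * W := by rw [Pi.one_def, diagonal_one, mul_one]
  rw [← mulVec_eq_zero_iff_of_mem_unitaryGroup hW, ← hVW]
  ext f
  rw [← eval_torusRestriction, hzero, map_zero, Pi.zero_apply]

theorem evalEntries_eq_zero_of_forall_mem_specialUnitaryGroup {k : ℕ}
    (hk : k + 1 < Fintype.card n) {P : n → MvPolynomial (n × n) ℂ}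
    (hP : ∀ f, (P f).IsHomogeneous k) {ψ : n → ℂ}
    (h : ∀ U ∈ specialUnitaryGroup n ℂ, ∃ c : ℂ, evalEntries P U = c • (Uᴴ *ᵥ ψ))
    {U : Matrix n n ℂ} (hU : U ∈ unitaryGroup n ℂ) : evalEntries P U = 0 := by
  have : Nonempty n := Fintype.card_pos_iff.1 (by omega)
  refine evalEntries_eq_zero_of_forall_mem_unitaryGroup (ψ := ψ) hk hP (fun U hU => ?_) hU
  obtain ⟨l, hl, hlU⟩ := exists_smul_mem_specialUnitaryGroup hU
  obtain ⟨c, hc⟩ := h _ hlU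
  refine ⟨(l ^ k)⁻¹ * (c * star l), ?_⟩
  rw [mul_smul, eq_inv_smul_iff₀ (pow_ne_zero k hl), ← evalEntries_smul hP, hc, conjTranspose_smul,
    smul_mulVec, smul_smul]

end PolynomialMap

section Amplitude

variable {d k : ℕ} (v : ((Fin k → Fin d) × (Fin k → Fin d)) × Fin d → ℂ)

/-- The polynomials in the entries of `U` that are the components of the vector `φ(U)` with
`|v⟩⟨v| ⋆ U^{⊗k} = |φ(U)⟩⟨φ(U)|`. -/
def amplitude (f : Fin d) : MvPolynomial (Fin d × Fin d) ℂ :=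
  ∑ x : (Fin k → Fin d) × (Fin k → Fin d), C (v (x, f)) * ∏ j, X (x.2 j, x.1 j)

theorem isHomogeneous_amplitude (f : Fin d) : (amplitude v f).IsHomogeneous k :=
  .sum _ _ _ fun x _ => .C_mul (by
    simpa using IsHomogeneous.prod Finset.univ (fun j => (X (x.2 j, x.1 j) : MvPolynomial _ ℂ))
      (fun _ => 1) fun j _ => isHomogeneous_X ℂ _) _

variable (U : Matrix (Fin d) (Fin d) ℂ)

theorem choiProjK_mconj (x y : (Fin k → Fin d) × (Fin k → Fin d)) :
    choiProjK k (mconj U) y x = star (∏ j, U (y.2 j) (y.1 j)) * ∏ j, U (x.2 j) (x.1 j) := by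
  simp [choiProjK, choiProj, outer, choiVec, mconj, vecMulVec_apply, Finset.prod_mul_distrib]

theorem actK_apply (S : Matrix (((Fin k → Fin d) × (Fin k → Fin d)) × Fin d)
      (((Fin k → Fin d) × (Fin k → Fin d)) × Fin d) ℂ) (f g : Fin d) :
    actK S U f g = ∑ x, ∑ y, S (x, f) (y, g) * choiProjK k (mconj U) y x := by
  simp [actK, ptrLeft, mul_apply, Fintype.sum_prod_type, one_apply]

theorem actK_outer : actK (outer v) U = outer (evalEntries (amplitude v) U) := by
  ext f g
  simp only [actK_apply, outer, vecMulVec_apply, Pi.star_apply, evalEntries, amplitude, map_sum,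
    map_mul, map_prod, eval_C, eval_X, star_sum, star_mul', Finset.sum_mul_sum, choiProjK_mconj]
  refine Finset.sum_congr rfl fun x _ => Finset.sum_congr rfl fun y _ => ?_
  ring

theorem actK_sum {ι : Type*} (s : Finset ι)
    (S : ι → Matrix (((Fin k → Fin d) × (Fin k → Fin d)) × Fin d)
      (((Fin k → Fin d) × (Fin k → Fin d)) × Fin d) ℂ) :
    actK (∑ i ∈ s, S i) U = ∑ i ∈ s, actK (S i) U := by
  ext f g
  simp only [actK, ptrLeft, Finset.sum_mul, Matrix.sum_apply]
  exact Finset.sum_comm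

end Amplitude

theorem inversion_no_go_k_calls_general {d k : ℕ} (hkd : k + 1 < d) {ψ : Fin d → ℂ} (hψ : ψ ≠ 0)
    {S : Matrix (((Fin k → Fin d) × (Fin k → Fin d)) × Fin d)
      (((Fin k → Fin d) × (Fin k → Fin d)) × Fin d) ℂ} (hS : S.PosSemidef)
    {p : Matrix (Fin d) (Fin d) ℂ → ℂ}
    (htarget : ∀ U ∈ specialUnitaryGroup (Fin d) ℂ, actK S U = p U • (Uᴴ * outer ψ * U))
    {U : Matrix (Fin d) (Fin d) ℂ} (hU : U ∈ specialUnitaryGroup (Fin d) ℂ) : p U = 0 := by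
  obtain ⟨m, v, rfl⟩ := posSemidef_iff_eq_sum_vecMulVec.1 hS
  have hsum : ∀ U ∈ specialUnitaryGroup (Fin d) ℂ,
      ∑ a, outer (evalEntries (amplitude (v a)) U) = p U • outer (Uᴴ *ᵥ ψ) := by
    intro U hU
    rw [← conjTranspose_mul_outer_mul, ← htarget U hU, actK_sum]
    exact Finset.sum_congr rfl fun a _ => (actK_outer (v a) U).symm
  have hU' := specialUnitaryGroup_le_unitaryGroup hU
  have hzero : ∀ a, evalEntries (amplitude (v a)) U = 0 := fun a =>
    evalEntries_eq_zero_of_forall_mem_specialUnitaryGroup (by simpa using hkd)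
      (isHomogeneous_amplitude (v a))
      (fun U hU => exists_eq_smul_of_sum_outer_eq_smul_outer (hsum U hU) a) hU'
  have hp : p U • outer (Uᴴ *ᵥ ψ) = 0 := by
    rw [← hsum U hU]
    exact Finset.sum_eq_zero fun a _ => outer_eq_zero_iff.2 (hzero a)
  refine (smul_eq_zero.1 hp).resolve_right fun h => hψ ?_
  rwa [outer_eq_zero_iff, ← star_eq_conjTranspose,
    mulVec_eq_zero_iff_of_mem_unitaryGroup (Unitary.star_mem hU')] at h

/-- **No-go for probabilistic exact inversion with `k < d−1` parallel calls,
known pure input state.** (`k + 1 < d` is equivalent to `k < d − 1`.) -/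
theorem inversion_no_go_k_calls
    (d k : ℕ) (hk : 1 ≤ k) (hkd : k + 1 < d) (p : ℝ)
    (ψ : Fin d → ℂ) (hψ : star ψ ⬝ᵥ ψ = 1)
    (S Sch : Matrix (((Fin k → Fin d) × (Fin k → Fin d)) × Fin d)
        (((Fin k → Fin d) × (Fin k → Fin d)) × Fin d) ℂ)
    (hprot : IsProtocolK S Sch)
    (htarget : ∀ U : Matrix (Fin d) (Fin d) ℂ, U ∈ Matrix.specialUnitaryGroup (Fin d) ℂ →
      actK S U = (p : ℂ) • (Uᴴ * outer ψ * U)) :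
    p = 0 := by
  have hψ0 : ψ ≠ 0 := by rintro rfl; simp at hψ
  exact_mod_cast inversion_no_go_k_calls_general hkd hψ0 hprot.1 htarget (one_mem _)
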